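/- Let R be a commutative ring, x : ℕ → R a sequence, and n ≥ 0. Then 2 · det A_{2n+1} = det C_n · det D_{n+1}, where A_{2n+1} is the (2n+1)×(2n+1) matrix with (i,j)-entry x_{|i−j|}, C_n is the n×n matrix with (i,j)-entry x_{|i−j|} − x_{i+j}, and D_{n+1} is the (n+1)×(n+1) matrix with (i,j)-entry x_{|i−j|} + x_{i+j−2} (indices i, j run over 1,…,size; the 0×0 determinant is 1). -/

import Mathlib

/-!
Centre the index set of `A_{2n+1}` at its middle index, so that it becomes `-n, …, n`. The matrix
is invariant under `i ↦ -i`. Subtracting row `i` from row `-i` for each `i = 1, …, n` and then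
adding column `-j` to column `j` for each `j = 1, …, n` makes it block lower triangular with
diagonal blocks `C_n` and `E_{n+1}`, where `E_{n+1}` agrees with `D_{n+1}` except that its zeroth
column is half of that of `D_{n+1}`. These operations have determinant one, so
`det A_{2n+1} = det C_n * det E_{n+1}`, and doubling the zeroth column of `E_{n+1}` gives the
factor two without any division in `R`.
-/

/-- The `n × n` matrix `A_n` with `(i,j)`-entry `x_{|i-j|}` (rows and columns
indexed by `1, …, n`, here realized by `Fin n` via `i ↦ i+1`). -/
def matA {R : Type*} [CommRing R] (x : ℕ → R) (n : ℕ) : Matrix (Fin n) (Fin n) R :=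
  Matrix.of fun i j => x ((i : ℤ) - (j : ℤ)).natAbs

/-- The `n × n` matrix `B_n` with `(i,j)`-entry `x_{|i-j|} - x_{i+j-1}`. -/
def matB {R : Type*} [CommRing R] (x : ℕ → R) (n : ℕ) : Matrix (Fin n) (Fin n) R :=
  Matrix.of fun i j => x ((i : ℤ) - (j : ℤ)).natAbs - x ((i : ℕ) + (j : ℕ) + 1)

/-- The `n × n` matrix `B'_n` with `(i,j)`-entry `x_{|i-j|} + x_{i+j-1}`. -/
def matB' {R : Type*} [CommRing R] (x : ℕ → R) (n : ℕ) : Matrix (Fin n) (Fin n) R :=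
  Matrix.of fun i j => x ((i : ℤ) - (j : ℤ)).natAbs + x ((i : ℕ) + (j : ℕ) + 1)

/-- The `n × n` matrix `C_n` with `(i,j)`-entry `x_{|i-j|} - x_{i+j}`. -/
def matC {R : Type*} [CommRing R] (x : ℕ → R) (n : ℕ) : Matrix (Fin n) (Fin n) R :=
  Matrix.of fun i j => x ((i : ℤ) - (j : ℤ)).natAbs - x ((i : ℕ) + (j : ℕ) + 2)

/-- The `n × n` matrix `D_n` with `(i,j)`-entry `x_{|i-j|} + x_{i+j-2}`. -/
def matD {R : Type*} [CommRing R] (x : ℕ → R) (n : ℕ) : Matrix (Fin n) (Fin n) R :=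
  Matrix.of fun i j => x ((i : ℤ) - (j : ℤ)).natAbs + x ((i : ℕ) + (j : ℕ))

/-- The matrix `D_{n+1}` with its zeroth column `2 x_i` replaced by `x_i`. -/
def matE {R : Type*} [CommRing R] (x : ℕ → R) (n : ℕ) :
    Matrix (Fin (n + 1)) (Fin (n + 1)) R :=
  (matD x (n + 1)).updateCol 0 fun i => x i

theorem two_mul_det_matE {R : Type*} [CommRing R] (x : ℕ → R) (n : ℕ) :
    2 * (matE x n).det = (matD x (n + 1)).det := by
  rw [matE, ← Matrix.det_updateCol_smul]
  congr 1
  ext i j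
  refine Fin.cases ?_ (fun j => ?_) j
  · simp [matD, two_mul]
  · simp

/-- The bijection from `Fin n ⊕ Fin (n + 1)` to the indices of `A_{2n+1}` that, relative to the
middle index, sends `inl k` to `-(k + 1)` and `inr k` to `k`. -/
def centredEquiv (n : ℕ) : Fin n ⊕ Fin (n + 1) ≃ Fin (2 * n + 1) :=
  ((Equiv.sumCongr Fin.revPerm (Equiv.refl _)).trans finSumFinEquiv).trans
    (finCongr (by omega))

theorem centredEquiv_inl (n : ℕ) (k : Fin n) :
    ((centredEquiv n (Sum.inl k) : Fin (2 * n + 1)) : ℕ) = n - (k + 1) := by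
  simp [centredEquiv]

theorem centredEquiv_inr (n : ℕ) (k : Fin (n + 1)) :
    ((centredEquiv n (Sum.inr k) : Fin (2 * n + 1)) : ℕ) = n + k := by
  simp [centredEquiv]

/-- The rectangular Hankel matrix `x_{i+j+1}`, with `i` and `j` counted from zero. -/
def hankelMat {R : Type*} [CommRing R] (x : ℕ → R) (m k : ℕ) : Matrix (Fin m) (Fin k) R :=
  Matrix.of fun i j => x ((i : ℕ) + (j : ℕ) + 1)

theorem matA_submatrix_centredEquiv {R : Type*} [CommRing R] (x : ℕ → R) (n : ℕ) :
    (matA x (2 * n + 1)).submatrix (centredEquiv n) (centredEquiv n) =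
      Matrix.fromBlocks (matA x n) (hankelMat x n (n + 1))
        (hankelMat x (n + 1) n) (matA x (n + 1)) := by
  ext (i | i) (j | j) <;>
    simp only [Matrix.submatrix_apply, matA, hankelMat, Matrix.of_apply, Matrix.fromBlocks_apply₁₁,
      Matrix.fromBlocks_apply₁₂, Matrix.fromBlocks_apply₂₁, Matrix.fromBlocks_apply₂₂,
      centredEquiv_inl, centredEquiv_inr] <;>
    congr 1 <;> omega

/-- The `n × (n + 1)` matrix with ones at the entries `(i, i + 1)`; it encodes the pairing of the
index `-(i + 1)` with `i + 1` in the row and column operations. -/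
def shiftMat (R : Type*) [CommRing R] (n : ℕ) : Matrix (Fin n) (Fin (n + 1)) R :=
  Matrix.of fun i k => if k = i.succ then 1 else 0

theorem shiftMat_mul_apply {R m : Type*} [CommRing R] (n : ℕ) (M : Matrix (Fin (n + 1)) m R)
    (i : Fin n) (j : m) : (shiftMat R n * M) i j = M i.succ j := by
  simp [shiftMat, Matrix.mul_apply]

theorem mul_shiftMat_apply_zero {R m : Type*} [CommRing R] (n : ℕ) (M : Matrix m (Fin n) R)
    (i : m) : (M * shiftMat R n) i 0 = 0 := by
  simp [shiftMat, Matrix.mul_apply, (Fin.succ_ne_zero _).symm]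

theorem mul_shiftMat_apply_succ {R m : Type*} [CommRing R] (n : ℕ) (M : Matrix m (Fin n) R)
    (i : m) (j : Fin n) : (M * shiftMat R n) i j.succ = M i j := by
  simp [shiftMat, Matrix.mul_apply]

/-- The row operations (left factor) and column operations (right factor) turn the centred
`A_{2n+1}` into a block lower triangular matrix. -/
theorem blocks_reduction {R : Type*} [CommRing R] (x : ℕ → R) (n : ℕ) :
    Matrix.fromBlocks 1 (-shiftMat R n) 0 1 *
        Matrix.fromBlocks (matA x n) (hankelMat x n (n + 1))
          (hankelMat x (n + 1) n) (matA x (n + 1)) *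
        Matrix.fromBlocks 1 (shiftMat R n) 0 1 =
      Matrix.fromBlocks (matC x n) 0 (hankelMat x (n + 1) n) (matE x n) := by
  have hC : matA x n - shiftMat R n * hankelMat x (n + 1) n = matC x n := by
    ext i j
    rw [Matrix.sub_apply, shiftMat_mul_apply]
    simp only [matA, matC, hankelMat, Matrix.of_apply, Fin.val_succ]
    congr 2
    omega
  simp only [Matrix.fromBlocks_multiply, Matrix.one_mul, Matrix.mul_one, Matrix.zero_mul,
    Matrix.mul_zero, zero_add, add_zero, Matrix.neg_mul, ← sub_eq_add_neg, hC]
  congr 1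
  · ext i j
    rw [Matrix.add_apply, Matrix.sub_apply, shiftMat_mul_apply, Matrix.zero_apply]
    refine Fin.cases ?_ (fun j => ?_) j
    · rw [mul_shiftMat_apply_zero]
      simp only [matA, hankelMat, Matrix.of_apply, Fin.val_succ, Fin.val_zero]
      rw [zero_add, sub_eq_zero]
      congr 1
    · rw [mul_shiftMat_apply_succ]
      simp only [matA, matC, hankelMat, Matrix.of_apply, Fin.val_succ]
      rw [show (((i : ℕ) + 1 : ℕ) - ((j : ℕ) + 1 : ℕ) : ℤ).natAbs = ((i : ℤ) - j).natAbs by omega,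
        show (i : ℕ) + (j + 1) + 1 = i + j + 2 by omega]
      ring
  · ext i j
    rw [Matrix.add_apply]
    refine Fin.cases ?_ (fun j => ?_) j
    · rw [mul_shiftMat_apply_zero]
      simp [matA, matE]
    · rw [mul_shiftMat_apply_succ]
      simp only [matA, matE, matD, hankelMat, Matrix.of_apply, Matrix.updateCol_apply,
        Fin.succ_ne_zero, if_false, Fin.val_succ]
      rw [add_comm, add_assoc]

theorem det_matA_odd {R : Type*} [CommRing R] (x : ℕ → R) (n : ℕ) :
    (matA x (2 * n + 1)).det = (matC x n).det * (matE x n).det := by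
  have h := congrArg Matrix.det (blocks_reduction x n)
  simpa only [Matrix.det_mul, Matrix.det_fromBlocks_zero₂₁, Matrix.det_fromBlocks_zero₁₂,
    Matrix.det_one, one_mul, mul_one, ← matA_submatrix_centredEquiv,
    Matrix.det_submatrix_equiv_self] using h

/-- Identity `a_{2n+1} = c_n · d_{n+1}` of Propositions 8.9/9.5; since
`det D_{n+1} = 2·d_{n+1}`, it reads `2 · det A_{2n+1} = det C_n · det D_{n+1}`. -/
theorem two_det_A_odd_eq_det_C_mul_det_D {R : Type*} [CommRing R] (x : ℕ → R) (n : ℕ) :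
    2 * (matA x (2 * n + 1)).det = (matC x n).det * (matD x (n + 1)).det := by
  rw [det_matA_odd, ← two_mul_det_matE]
  ring
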